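/- In the deterministic system above, the explicit formula holds: Y_h = -λ₊ʰ/(λ₋-λ₊)·[(1-λ₋)Y_0 + μ_0] + λ₋ʰ/(λ₋-λ₊)·[(1-λ₊)Y_0 + μ_0] + g(1+F)(h-1) + H - [g(1+F) - H·0]·(κ/(λ₋-λ₊))·(λ₊ʰ/(1-λ₊) - λ₋ʰ/(1-λ₋)) + H·(κ/(λ₋-λ₊))·(λ₊ʰ/(1-λ₊) - λ₋ʰ/(1-λ₋)) - g(1+F)·(κ/(λ₋-λ₊))·[λ₋(1-λ₋ʰ)/(1-λ₋)² - λ₊(1-λ₊ʰ)/(1-λ₊)²]; i.e., Y_h equals g(1+F)(h-1) + H plus exponentially decaying terms in λ±ʰ plus the constant -g(1+F)·(κ/(λ₋-λ₊))·[λ₋/(1-λ₋)² - λ₊/(1-λ₊)²] up to terms vanishing geometrically. -/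

import Mathlib

/-- Explicit formula for Y_h in the deterministic system. -/
theorem stmt_6 (κ γ g F H : ℝ) (hγ0 : 0 < γ) (hγ1 : γ < 1) (hκ0 : 0 < κ)
    (hκ : κ < (1 - γ)^2 / 4)
    (lamp lamm : ℝ)
    (hp : lamp = (γ + 1)/2 + (1/2) * Real.sqrt ((1 - γ)^2 - 4*κ))
    (hm : lamm = (γ + 1)/2 - (1/2) * Real.sqrt ((1 - γ)^2 - 4*κ))
    (Y μ ξ : ℕ → ℝ) (hξ0 : ξ 0 = 0)
    (hY : ∀ t : ℕ, Y (t + 1) = Y t + μ t + ξ t)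
    (hμ : ∀ t : ℕ, μ (t + 1) = -κ * Y t + γ * μ t + κ * (H + g * (1 + F) * t))
    (hξ : ∀ t : ℕ, ξ (t + 1) = ξ t) :
    ∀ h : ℕ, Y h =
      -(lamp ^ h / (lamm - lamp)) * ((1 - lamm) * Y 0 + μ 0)
      + (lamm ^ h / (lamm - lamp)) * ((1 - lamp) * Y 0 + μ 0)
      + g * (1 + F) * ((h : ℝ) - 1) + H
      - g * (1 + F) * (κ / (lamm - lamp)) *
          (lamp ^ h / (1 - lamp) - lamm ^ h / (1 - lamm))
      + H * (κ / (lamm - lamp)) *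
          (lamp ^ h / (1 - lamp) - lamm ^ h / (1 - lamm))
      - g * (1 + F) * (κ / (lamm - lamp)) *
          (lamm * (1 - lamm ^ h) / (1 - lamm)^2
            - lamp * (1 - lamp ^ h) / (1 - lamp)^2) := by
  have hD : 0 < (1 - γ)^2 - 4*κ := by linarith
  have hs0 := Real.sqrt_pos.mpr hD
  have hs2 := Real.sq_sqrt hD.le
  set s := Real.sqrt ((1 - γ)^2 - 4*κ) with hs
  have hs1 : s < 1 - γ := by nlinarith
  have hγe : γ = lamp + lamm - 1 := by rw [hp, hm]; ring
  have hκe : κ = (1 - lamp) * (1 - lamm) := by rw [hp, hm]; linear_combination (1/4) * hs2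
  have ha : 1 - lamp ≠ 0 := by
    have : 0 < 1 - lamp := by rw [hp]; linarith
    exact this.ne'
  have hb : 1 - lamm ≠ 0 := by
    have : 0 < 1 - lamm := by rw [hm]; linarith
    exact this.ne'
  have hd : lamm - lamp ≠ 0 := by
    have : lamm - lamp < 0 := by rw [hm, hp]; linarith
    exact this.ne
  have hξz : ∀ t, ξ t = 0 := by
    intro t
    induction t with
    | zero => exact hξ0
    | succ n ih => rw [hξ, ih]
  have hrec : ∀ t : ℕ, Y (t + 1 + 1) = (lamp + lamm) * Y (t + 1) - lamp * lamm * Y t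
      + (1 - lamp) * (1 - lamm) * (H + g * (1 + F) * t) := by
    intro t
    have h1 := hY (t + 1)
    have h2 := hY t
    have h3 := hμ t
    rw [hξz] at h1 h2
    rw [hκe, hγe] at h3
    linear_combination h1 + h3 - (lamp + lamm - 1) * h2
  have h01 : Y 1 = Y 0 + μ 0 := by
    have := hY 0
    rw [hξz] at this
    simpa using this
  clear_value s
  clear hs hs0 hs1 hs2 hD hp hm
  rw [hκe]
  intro h
  induction h using Nat.twoStepInduction with
  | zero =>
    simp only [pow_zero, Nat.cast_zero]
    field_simp
    ring
  | one =>
    simp only [pow_one, Nat.cast_one]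
    rw [h01]
    field_simp
    ring
  | more n ih1 ih2 =>
    rw [hrec n, ih2, ih1]
    simp only [pow_succ, Nat.cast_add, Nat.cast_one]
    generalize lamp ^ n = A
    generalize lamm ^ n = B
    generalize Y 0 = y0
    generalize μ 0 = m0
    field_simp
    ring
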